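/- Let d ≥ 3 be an integer, ε ≠ 0 and τ ∈ ℝ, and let V : ℝ^d → ℝ be a continuous real-valued function. If u is a classical solution of −Δu + V u ± iεu − τu = f on ℝ^d with u, ∇u ∈ L²(ℝ^d) and f ∈ L²(ℝ^d), then |ε|·‖u‖²_X ≤ ‖f‖²_{X*} + sup_{R>0} R^{−3}∫_{B(0,R)} |u(x)|² dx + ‖∇u‖²_X. -/

import Mathlib

/-!
Write `U = ‖u‖²_X`, `N = ‖f‖_{X*}`, `M = ∫ |u|²` and `A = sup_R R⁻³ ∫_{B(0,R)} |u|²`. In fact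
`|ε| U ≤ max (A, N²)`.

* Testing the equation against `χ(x/R) ū` and taking imaginary parts removes the real potential. As
  `R → ∞` the cutoff error, at most `R⁻¹ ∫_{B(0,2R)} |u| |∇u| ≲ R⁻¹ √(M · R ‖∇u‖²_X)`, vanishes, so
  `|ε| M ≤ ∫ |f| |u|`.
* Cauchy–Schwarz on dyadic shells bounds `∫ |f| |u|` by `N √U`.
* Splitting the radii at `|ε| R² = 1` gives `|ε| U ≤ max (A, √|ε| · |ε| M)`.

If `A` does not dominate, then `(|ε| U)² ≤ |ε| (|ε| M)² ≤ N² (|ε| U)`, and the finite factor `|ε| U`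
cancels.
-/

noncomputable section
open MeasureTheory Metric Set ENNReal

abbrev Ed (d : ℕ) := EuclideanSpace ℝ (Fin d)

/-- partial derivative of a complex valued function -/
def pd {d : ℕ} (u : Ed d → ℂ) (i : Fin d) (x : Ed d) : ℂ :=
  fderiv ℝ u x (EuclideanSpace.single i 1)

/-- Laplacian of a complex valued function -/
def lap {d : ℕ} (u : Ed d → ℂ) (x : Ed d) : ℂ :=
  ∑ i, fderiv ℝ (pd u i) x (EuclideanSpace.single i 1)

/-- squared norm of the gradient, as an extended nonnegative real -/
def gradSq {d : ℕ} (u : Ed d → ℂ) (x : Ed d) : ℝ≥0∞ :=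
  ∑ i, (‖pd u i x‖₊ : ℝ≥0∞) ^ 2

/-- |u(x)|² as an extended nonnegative real -/
def usq {d : ℕ} (u : Ed d → ℂ) (x : Ed d) : ℝ≥0∞ := (‖u x‖₊ : ℝ≥0∞) ^ 2

/-- radial derivative ∂_r V (x) = (x/|x|)·∇V(x) -/
def radialDeriv {d : ℕ} (V : Ed d → ℝ) (x : Ed d) : ℝ :=
  fderiv ℝ V x x / ‖x‖

/-- Morrey–Campanato type quantity sup_{R>0} (1/R) ∫_{B(0,R)} g -/
def nX2 {d : ℕ} (g : Ed d → ℝ≥0∞) : ℝ≥0∞ :=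
  ⨆ (R : ℝ) (_ : 0 < R), (ENNReal.ofReal R)⁻¹ * ∫⁻ x in ball (0 : Ed d) R, g x

/-- dyadic shell C_j -/
def shell (d : ℕ) (j : ℤ) : Set (Ed d) := {x | (2:ℝ)^j < ‖x‖ ∧ ‖x‖ ≤ (2:ℝ)^(j+1)}

/-- the dual norm ‖f‖_{X*} applied to g = |f|² -/
def nXstar {d : ℕ} (g : Ed d → ℝ≥0∞) : ℝ≥0∞ :=
  ∑' j : ℤ, (ENNReal.ofReal ((2:ℝ)^(j+1)) * ∫⁻ x in shell d j, g x) ^ (1/2 : ℝ)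

/-- the index j₀ with 2^{j₀} < ρ ≤ 2^{j₀+1} -/
def jIdx (ρ : ℝ) : ℤ := ⌈Real.logb 2 ρ⌉ - 1

/-- sup_{R ≥ ρ} (1/R)∫_{B(0,R)} g -/
def nX2r {d : ℕ} (ρ : ℝ) (g : Ed d → ℝ≥0∞) : ℝ≥0∞ :=
  ⨆ (R : ℝ) (_ : ρ ≤ R), (ENNReal.ofReal R)⁻¹ * ∫⁻ x in ball (0 : Ed d) R, g x

/-- the dual norm ‖f‖_{X*_ρ} applied to g = |f|² -/
def nXstarr {d : ℕ} (ρ : ℝ) (g : Ed d → ℝ≥0∞) : ℝ≥0∞ :=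
  (∑' j : {j : ℤ // jIdx ρ ≤ j},
    (ENNReal.ofReal ((2:ℝ)^((j:ℤ)+1)) * ∫⁻ x in shell d (j:ℤ), g x) ^ (1/2 : ℝ))
  + (ENNReal.ofReal ρ * ∫⁻ x in ball (0 : Ed d) ρ, g x) ^ (1/2 : ℝ)

/-- integral of g over the sphere of radius R w.r.t. (d-1)-dimensional Hausdorff measure -/
def sphInt {d : ℕ} (R : ℝ) (g : Ed d → ℝ≥0∞) : ℝ≥0∞ :=
  ∫⁻ x in Metric.sphere (0 : Ed d) R, g x ∂(μH[(d:ℝ) - 1])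

/-! ### Cauchy–Schwarz -/

lemma lintegral_mul_le_rpow_mul_rpow {α : Type*} [MeasurableSpace α] {μ : Measure α}
    {F G : α → ℝ≥0∞} (hF : AEMeasurable F μ) (hG : AEMeasurable G μ) :
    ∫⁻ x, F x * G x ∂μ ≤ ((∫⁻ x, F x ^ 2 ∂μ) * ∫⁻ x, G x ^ 2 ∂μ) ^ (1 / 2 : ℝ) := by
  have h := ENNReal.lintegral_mul_le_Lp_mul_Lq μ .two_two hF hG
  simpa only [Pi.mul_apply, ENNReal.rpow_two, ← ENNReal.mul_rpow_of_nonneg _ _ one_half_pos.le]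
    using h

/-! ### The current of a complex function -/

section Current

variable {d : ℕ} {u : Ed d → ℂ}

/-- The `i`-th component of the current `Im (ū ∇u)`, whose divergence is `Im (ū Δu)`. -/
def current (u : Ed d → ℂ) (i : Fin d) (x : Ed d) : ℝ :=
  (starRingEnd ℂ (u x) * pd u i x).im

lemma contDiff_pd {m n : WithTop ℕ∞} (hu : ContDiff ℝ n u) (hmn : m + 1 ≤ n) (i : Fin d) :
    ContDiff ℝ m (pd u i) :=
  (hu.fderiv_right hmn).clm_apply contDiff_const

lemma contDiff_current {m n : WithTop ℕ∞} (hu : ContDiff ℝ n u) (hmn : m + 1 ≤ n) (i : Fin d) :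
    ContDiff ℝ m (current u i) :=
  Complex.imCLM.contDiff.comp <| (Complex.conjCLE.contDiff.comp
    (hu.of_le (le_self_add.trans hmn))).mul (contDiff_pd hu hmn i)

lemma continuous_lap (hu : ContDiff ℝ 2 u) : Continuous (lap u) :=
  continuous_finsetSum _ fun i _ =>
    ((contDiff_pd hu one_add_one_eq_two.le i).continuous_fderiv one_ne_zero).clm_apply
      continuous_const

lemma enorm_current_le (u : Ed d → ℂ) (i : Fin d) (x : Ed d) :
    ‖current u i x‖ₑ ≤ ‖u x‖ₑ * ‖pd u i x‖ₑ := by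
  rw [← RCLike.enorm_conj (u x), ← enorm_mul]
  exact enorm_le_iff_norm_le.2 (Complex.abs_im_le_norm _)

/-- There are no first-order terms on the right, because `|∂ᵢu|²` is real. -/
lemma fderiv_current_single (hu : ContDiff ℝ 2 u) (i : Fin d) (x : Ed d) :
    fderiv ℝ (current u i) x (EuclideanSpace.single i 1) =
      (starRingEnd ℂ (u x) * fderiv ℝ (pd u i) x (EuclideanSpace.single i 1)).im := by
  have hasFDerivAt_u : HasFDerivAt u (fderiv ℝ u x) x :=
    (hu.differentiable two_ne_zero x).hasFDerivAt
  have hasFDerivAt_pd : HasFDerivAt (pd u i) (fderiv ℝ (pd u i) x) x :=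
    ((contDiff_pd hu one_add_one_eq_two.le i).differentiable one_ne_zero x).hasFDerivAt
  have hasFDerivAt_conj := (Complex.conjCLE.toContinuousLinearMap.hasFDerivAt (x := u x)).comp x
    hasFDerivAt_u
  have fderiv_eq : fderiv ℝ (current u i) x = _ :=
    (Complex.imCLM.hasFDerivAt.comp x (hasFDerivAt_conj.mul hasFDerivAt_pd)).fderiv
  rw [fderiv_eq]
  simp only [ContinuousLinearEquiv.coe_coe, ContinuousAlgEquiv.coe_coeCLE, Function.comp_apply,
    Complex.conjCAE_apply, pd, ContinuousLinearMap.comp_add, add_apply,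
    ContinuousLinearMap.comp_apply, smul_apply, smul_eq_mul, Complex.imCLM_apply, Complex.mul_im,
    Complex.conj_re, Complex.conj_im, ContinuousAlgEquiv.coeCLE_apply]
  ring

lemma sum_fderiv_current_single (hu : ContDiff ℝ 2 u) (x : Ed d) :
    ∑ i, fderiv ℝ (current u i) x (EuclideanSpace.single i 1) =
      (starRingEnd ℂ (u x) * lap u x).im := by
  simp_rw [fderiv_current_single hu, lap, Finset.mul_sum, Complex.im_sum]

end Current

/-! ### Integration by parts against a compactly supported function -/

section IntegrationByParts

variable {E : Type*} [NormedAddCommGroup E] [NormedSpace ℝ E] [MeasurableSpace E] [BorelSpace E]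
  {μ : Measure E} {φ g : E → ℝ}

lemma integrable_mul_fderiv_of_hasCompactSupport [IsFiniteMeasureOnCompacts μ]
    (hφ : Continuous φ) (hc : HasCompactSupport φ) (hg : ContDiff ℝ 1 g) (v : E) :
    Integrable (fun x => φ x * fderiv ℝ g x v) μ :=
  (hφ.mul ((hg.continuous_fderiv one_ne_zero).clm_apply
    continuous_const)).integrable_of_hasCompactSupport hc.mul_right

lemma integral_mul_fderiv_eq_neg_of_hasCompactSupport [FiniteDimensional ℝ E]
    [μ.IsAddHaarMeasure] (hφ : ContDiff ℝ 1 φ) (hc : HasCompactSupport φ) (hg : ContDiff ℝ 1 g)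
    (v : E) :
    ∫ x, φ x * fderiv ℝ g x v ∂μ = -∫ x, fderiv ℝ φ x v * g x ∂μ := by
  refine integral_mul_fderiv_eq_neg_fderiv_mul_of_integrable ?_
    (integrable_mul_fderiv_of_hasCompactSupport hφ.continuous hc hg v)
    ((hφ.continuous.mul hg.continuous).integrable_of_hasCompactSupport hc.mul_right)
    (fun x _ => hφ.differentiable one_ne_zero x) (fun x _ => hg.differentiable one_ne_zero x)
  exact (((hφ.continuous_fderiv one_ne_zero).clm_apply continuous_const).mul
    hg.continuous).integrable_of_hasCompactSupport (hc.fderiv_apply (𝕜 := ℝ) v).mul_right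

end IntegrationByParts

lemma integral_mul_im_conj_mul_lap {d : ℕ} {u : Ed d → ℂ} (hu : ContDiff ℝ 2 u) {φ : Ed d → ℝ}
    (hφ : ContDiff ℝ 1 φ) (hc : HasCompactSupport φ) :
    ∫ x, φ x * (starRingEnd ℂ (u x) * lap u x).im =
      -∑ i, ∫ x, fderiv ℝ φ x (EuclideanSpace.single i 1) * current u i x := by
  have hcur (i : Fin d) : ContDiff ℝ 1 (current u i) :=
    contDiff_current hu one_add_one_eq_two.le i
  simp_rw [← sum_fderiv_current_single hu, Finset.mul_sum]
  rw [integral_finsetSum _ fun i _ =>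
      integrable_mul_fderiv_of_hasCompactSupport hφ.continuous hc (hcur i) _,
    ← Finset.sum_neg_distrib]
  exact Finset.sum_congr rfl fun i _ =>
    integral_mul_fderiv_eq_neg_of_hasCompactSupport hφ hc (hcur i) _

/-! ### Cutoffs -/

section Cutoff

variable {E : Type*} [NormedAddCommGroup E] [NormedSpace ℝ E] {φ : E → ℝ} {C R : ℝ}

/-- `φ` is a `C¹` cutoff at scale `R` around the origin: it equals `1` on `B(0, R)`, its support
lies in `B(0, 2R)`, and its gradient is at most `C / R`. -/
structure IsCutoff (φ : E → ℝ) (C R : ℝ) : Prop where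
  contDiff : ContDiff ℝ 1 φ
  nonneg : ∀ x, 0 ≤ φ x
  le_one : ∀ x, φ x ≤ 1
  eq_one : ∀ x ∈ ball 0 R, φ x = 1
  tsupport_subset : tsupport φ ⊆ ball 0 (2 * R)
  norm_fderiv_le : ∀ x, ‖fderiv ℝ φ x‖ ≤ C / R

lemma IsCutoff.hasCompactSupport [FiniteDimensional ℝ E] (hφ : IsCutoff φ C R) :
    HasCompactSupport φ :=
  (isCompact_closedBall 0 (2 * R)).of_isClosed_subset (isClosed_tsupport φ)
    (hφ.tsupport_subset.trans ball_subset_closedBall)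

lemma IsCutoff.integrable_mul [FiniteDimensional ℝ E] [MeasurableSpace E] [BorelSpace E]
    {μ : Measure E} [IsFiniteMeasureOnCompacts μ] (hφ : IsCutoff φ C R) {g : E → ℝ}
    (hg : Continuous g) : Integrable (fun x => φ x * g x) μ :=
  (hφ.contDiff.continuous.mul hg).integrable_of_hasCompactSupport hφ.hasCompactSupport.mul_right

lemma IsCutoff.enorm_fderiv_apply_le (hφ : IsCutoff φ C R) {v : E} (hv : ‖v‖ ≤ 1) (x : E) :
    ‖fderiv ℝ φ x v‖ₑ ≤ (ball 0 (2 * R)).indicator (fun _ => ENNReal.ofReal (C / R)) x := by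
  by_cases hx : x ∈ ball 0 (2 * R)
  · rw [indicator_of_mem hx, ← ofReal_norm]
    exact ENNReal.ofReal_le_ofReal
      (((fderiv ℝ φ x).le_of_opNorm_le_of_le (hφ.norm_fderiv_le x) hv).trans_eq (mul_one _))
  · have : fderiv ℝ φ x = 0 := by
      by_contra h
      exact hx (hφ.tsupport_subset (support_fderiv_subset ℝ h))
    simp [this]

variable (E) in
lemma exists_forall_exists_isCutoff [FiniteDimensional ℝ E] :
    ∃ C : ℝ, ∀ R > 0, ∃ φ : E → ℝ, IsCutoff φ C R := by
  let χ : ContDiffBump (0 : E) := ⟨1, 3 / 2, one_pos, by norm_num⟩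
  have hχ : ContDiff ℝ 1 χ := χ.contDiff
  obtain ⟨C, hC⟩ : ∃ C, ∀ x, ‖fderiv ℝ χ x‖ ≤ C :=
    (hχ.continuous_fderiv one_ne_zero).bounded_above_of_compact_support
      (χ.hasCompactSupport.fderiv (𝕜 := ℝ))
  refine ⟨C, fun R hR => ⟨fun x => χ (R⁻¹ • x), hχ.comp (contDiff_const_smul _),
    fun _ => χ.nonneg, fun _ => χ.le_one, fun x hx => ?_, fun x hx => ?_, fun x => ?_⟩⟩
  · refine χ.one_of_mem_closedBall ?_
    rw [mem_ball_zero_iff] at hx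
    rw [mem_closedBall_zero_iff, norm_smul, norm_inv, Real.norm_of_nonneg hR.le,
      inv_mul_le_iff₀ hR]
    simpa [χ] using hx.le
  · have hmem : R⁻¹ • x ∈ tsupport χ :=
      tsupport_comp_subset_preimage χ (continuous_const_smul R⁻¹) hx
    rw [χ.tsupport_eq, mem_closedBall_zero_iff, norm_smul, norm_inv, Real.norm_of_nonneg hR.le,
      inv_mul_le_iff₀ hR] at hmem
    rw [mem_ball_zero_iff]
    exact hmem.trans_lt (by simp only [χ]; linarith)
  · rw [fderiv_comp_smul (f := χ), norm_smul, norm_inv, Real.norm_of_nonneg hR.le, div_eq_inv_mul]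
    gcongr
    exact hC _

end Cutoff

/-! ### The energy inequality -/

section Energy

variable {d : ℕ} {u f : Ed d → ℂ} {φ : Ed d → ℝ} {c C R ρ : ℝ}

lemma usq_pd_le_gradSq (u : Ed d → ℂ) (i : Fin d) (x : Ed d) : usq (pd u i) x ≤ gradSq u x :=
  Finset.single_le_sum_of_canonicallyOrdered (f := fun i => usq (pd u i) x) (Finset.mem_univ i)

lemma setLIntegral_ball_le_ofReal_mul_nX2r (g : Ed d → ℝ≥0∞) (hR : 0 < R) (hρR : ρ ≤ R) :
    ∫⁻ x in ball 0 R, g x ≤ ENNReal.ofReal R * nX2r ρ g := by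
  rw [← ENNReal.inv_mul_le_iff (by simpa using hR) ENNReal.ofReal_ne_top]
  exact le_iSup₂ (f := fun (R : ℝ) (_ : ρ ≤ R) =>
    (ENNReal.ofReal R)⁻¹ * ∫⁻ x in ball (0 : Ed d) R, g x) R hρR

lemma nX2r_le_lintegral (hρ : 1 ≤ ρ) (g : Ed d → ℝ≥0∞) : nX2r ρ g ≤ ∫⁻ x, g x := by
  refine iSup₂_le fun R hR => ?_
  have inv_le_one : (ENNReal.ofReal R)⁻¹ ≤ 1 := by simpa using hρ.trans hR
  exact (mul_le_of_le_one_left' inv_le_one).trans (setLIntegral_le_lintegral _ _)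

lemma IsCutoff.setLIntegral_usq_le (hφ : IsCutoff φ C R) (hu : Continuous u) :
    ∫⁻ x in ball 0 R, usq u x ≤ ‖∫ x, φ x * ‖u x‖ ^ 2‖ₑ := by
  have hnonneg : 0 ≤ fun x => φ x * ‖u x‖ ^ 2 := fun x => mul_nonneg (hφ.nonneg x) (by positivity)
  rw [Real.enorm_of_nonneg (integral_nonneg hnonneg), ofReal_integral_eq_lintegral_ofReal
    (hφ.integrable_mul (by fun_prop)) (.of_forall hnonneg)]
  refine (setLIntegral_mono' measurableSet_ball fun x hx => ?_).trans
    (setLIntegral_le_lintegral (ball 0 R) _)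
  rw [hφ.eq_one x hx, one_mul, ENNReal.ofReal_pow (norm_nonneg _), ofReal_norm]
  rfl

lemma IsCutoff.enorm_integral_mul_im_le (hφ : IsCutoff φ C R) (u f : Ed d → ℂ) :
    ‖∫ x, φ x * (starRingEnd ℂ (u x) * f x).im‖ₑ ≤ ∫⁻ x, ‖f x‖ₑ * ‖u x‖ₑ := by
  refine (enorm_integral_le_lintegral_enorm _).trans (lintegral_mono fun x => ?_)
  rw [← enorm_mul, enorm_le_iff_norm_le, norm_mul, Real.norm_of_nonneg (hφ.nonneg x)]
  refine (mul_le_of_le_one_left (norm_nonneg _) (hφ.le_one x)).trans ?_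
  exact (Complex.abs_im_le_norm _).trans_eq (by simp [mul_comm])

lemma enorm_mul_setLIntegral_usq_le (hu : ContDiff ℝ 2 u) (hφ : IsCutoff φ C R)
    (balance : ∀ x, c * ‖u x‖ ^ 2 =
      (starRingEnd ℂ (u x) * lap u x).im + (starRingEnd ℂ (u x) * f x).im) :
    ‖c‖ₑ * ∫⁻ x in ball 0 R, usq u x ≤
      (∑ i, ∫⁻ x, ‖fderiv ℝ φ x (EuclideanSpace.single i 1)‖ₑ * ‖current u i x‖ₑ) +
        ∫⁻ x, ‖f x‖ₑ * ‖u x‖ₑ := by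
  have hcont := hu.continuous
  have hlap := continuous_lap hu
  have hsource : Continuous fun x => (starRingEnd ℂ (u x) * f x).im := by
    simp_rw [← sub_eq_of_eq_add' (balance _)]
    fun_prop
  have flux_le : ‖∫ x, φ x * (starRingEnd ℂ (u x) * lap u x).im‖ₑ ≤
      ∑ i, ∫⁻ x, ‖fderiv ℝ φ x (EuclideanSpace.single i 1)‖ₑ * ‖current u i x‖ₑ := by
    rw [integral_mul_im_conj_mul_lap hu hφ.contDiff hφ.hasCompactSupport, enorm_neg]
    refine (enorm_sum_le _ _).trans (Finset.sum_le_sum fun i _ => ?_)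
    simpa only [enorm_mul] using enorm_integral_le_lintegral_enorm
      fun x => fderiv ℝ φ x (EuclideanSpace.single i 1) * current u i x
  calc ‖c‖ₑ * ∫⁻ x in ball 0 R, usq u x
      ≤ ‖c * ∫ x, φ x * ‖u x‖ ^ 2‖ₑ := by
        rw [enorm_mul]
        gcongr
        exact hφ.setLIntegral_usq_le hcont
    _ = ‖(∫ x, φ x * (starRingEnd ℂ (u x) * lap u x).im) +
          ∫ x, φ x * (starRingEnd ℂ (u x) * f x).im‖ₑ := by
        rw [← integral_add (hφ.integrable_mul (by fun_prop)) (hφ.integrable_mul hsource),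
          ← integral_const_mul]
        simp_rw [← mul_add, ← balance, mul_left_comm]
    _ ≤ _ := (enorm_add_le _ _).trans (add_le_add flux_le (hφ.enorm_integral_mul_im_le u f))

lemma lintegral_enorm_fderiv_mul_current_le (hu : ContDiff ℝ 1 u) (hφ : IsCutoff φ C R)
    (hR : 0 < R) (hρR : ρ ≤ 2 * R) (i : Fin d) :
    ∫⁻ x, ‖fderiv ℝ φ x (EuclideanSpace.single i 1)‖ₑ * ‖current u i x‖ₑ ≤
      ENNReal.ofReal (C / R) *
        ((∫⁻ x, usq u x) * (ENNReal.ofReal (2 * R) * nX2r ρ (gradSq u))) ^ (1 / 2 : ℝ) := by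
  have hpd : Continuous (pd u i) := (contDiff_pd (m := 0) hu (zero_add 1).le i).continuous
  calc ∫⁻ x, ‖fderiv ℝ φ x (EuclideanSpace.single i 1)‖ₑ * ‖current u i x‖ₑ
      ≤ ∫⁻ x, (ball 0 (2 * R)).indicator
          (fun x => ENNReal.ofReal (C / R) * (‖u x‖ₑ * ‖pd u i x‖ₑ)) x := by
        refine lintegral_mono fun x => ?_
        rw [indicator_mul_left]
        exact mul_le_mul' (hφ.enorm_fderiv_apply_le (by simp) x) (enorm_current_le u i x)
    _ = ENNReal.ofReal (C / R) * ∫⁻ x in ball 0 (2 * R), ‖u x‖ₑ * ‖pd u i x‖ₑ := by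
        rw [lintegral_indicator measurableSet_ball,
          lintegral_const_mul' _ _ ENNReal.ofReal_ne_top]
    _ ≤ ENNReal.ofReal (C / R) * ((∫⁻ x in ball 0 (2 * R), usq u x) *
          ∫⁻ x in ball 0 (2 * R), usq (pd u i) x) ^ (1 / 2 : ℝ) := by
        gcongr
        exact lintegral_mul_le_rpow_mul_rpow hu.continuous.enorm.aemeasurable
          hpd.enorm.aemeasurable
    _ ≤ _ := by
        gcongr
        · exact Measure.restrict_le_self
        · exact (lintegral_mono (usq_pd_le_gradSq u i)).trans
            (setLIntegral_ball_le_ofReal_mul_nX2r _ (by positivity) hρR)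

open Filter Topology in
lemma tendsto_ofReal_div_mul_rpow_atTop (C : ℝ) {M G : ℝ≥0∞} (hM : M ≠ ⊤) (hG : G ≠ ⊤) :
    Tendsto (fun R : ℝ => ENNReal.ofReal (C / R) *
      (M * (ENNReal.ofReal (2 * R) * G)) ^ (1 / 2 : ℝ)) atTop (𝓝 0) := by
  have tendsto_inv : Tendsto (fun R => 2 * ENNReal.ofReal C ^ 2 * (M * G) * (ENNReal.ofReal R)⁻¹)
      atTop (𝓝 0) := by
    have hconst : 2 * ENNReal.ofReal C ^ 2 * (M * G) ≠ ⊤ := by finiteness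
    simpa using ENNReal.Tendsto.const_mul
      (tendsto_inv_iff.2 ENNReal.tendsto_ofReal_atTop) (.inr hconst)
  have tendsto_rpow := tendsto_inv.ennrpow_const (1 / 2)
  rw [ENNReal.zero_rpow_of_pos one_half_pos] at tendsto_rpow
  refine tendsto_rpow.congr' ?_
  filter_upwards [eventually_gt_atTop 0] with R hR
  have inv_mul_self : (ENNReal.ofReal R)⁻¹ * ENNReal.ofReal R = 1 :=
    ENNReal.inv_mul_cancel (by simpa using hR) ENNReal.ofReal_ne_top
  have sq_rpow_half (a : ℝ≥0∞) : (a ^ 2) ^ (1 / 2 : ℝ) = a := by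
    rw [← ENNReal.rpow_two, ← ENNReal.rpow_mul]; norm_num
  rw [← sq_rpow_half (ENNReal.ofReal (C / R)), ← ENNReal.mul_rpow_of_nonneg _ _ one_half_pos.le,
    ENNReal.ofReal_div_of_pos hR, ENNReal.ofReal_mul two_pos.le, ENNReal.ofReal_ofNat,
    ENNReal.div_eq_inv_mul]
  congr 1
  calc 2 * ENNReal.ofReal C ^ 2 * (M * G) * (ENNReal.ofReal R)⁻¹
      = 2 * ENNReal.ofReal C ^ 2 * (M * G) * (ENNReal.ofReal R)⁻¹ *
          ((ENNReal.ofReal R)⁻¹ * ENNReal.ofReal R) := by rw [inv_mul_self, mul_one]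
    _ = _ := by ring

open Filter Topology in
lemma enorm_mul_lintegral_usq_le (hu : ContDiff ℝ 2 u) (huL2 : ∫⁻ x, usq u x < ⊤)
    (hgrad : nX2r ρ (gradSq u) < ⊤)
    (balance : ∀ x, c * ‖u x‖ ^ 2 =
      (starRingEnd ℂ (u x) * lap u x).im + (starRingEnd ℂ (u x) * f x).im) :
    ‖c‖ₑ * ∫⁻ x, usq u x ≤ ∫⁻ x, ‖f x‖ₑ * ‖u x‖ₑ := by
  obtain ⟨C, hC⟩ := exists_forall_exists_isCutoff (Ed d)
  let cutoffError (R : ℝ) : ℝ≥0∞ := ∑ _i : Fin d, ENNReal.ofReal (C / R) *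
    ((∫⁻ x, usq u x) * (ENNReal.ofReal (2 * R) * nX2r ρ (gradSq u))) ^ (1 / 2 : ℝ)
  have local_le : ∀ᶠ R in atTop, ‖c‖ₑ * ∫⁻ x in ball 0 R, usq u x ≤
      cutoffError R + ∫⁻ x, ‖f x‖ₑ * ‖u x‖ₑ := by
    filter_upwards [eventually_gt_atTop 0, eventually_ge_atTop (ρ / 2)] with R hR hρR
    obtain ⟨φ, hφ⟩ := hC R hR
    refine (enorm_mul_setLIntegral_usq_le hu hφ balance).trans ?_
    exact add_le_add_left (Finset.sum_le_sum fun i _ =>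
      lintegral_enorm_fderiv_mul_current_le (hu.of_le one_le_two) hφ hR (by linarith) i) _
  have mass_tendsto : Tendsto (fun R => ‖c‖ₑ * ∫⁻ x in ball 0 R, usq u x) atTop
      (𝓝 (‖c‖ₑ * ∫⁻ x, usq u x)) :=
    ENNReal.Tendsto.const_mul ((aecover_ball tendsto_id).lintegral_tendsto_of_countably_generated
      (hu.continuous.enorm.measurable.pow_const 2).aemeasurable) (.inr enorm_ne_top)
  have error_tendsto : Tendsto cutoffError atTop (𝓝 0) := by
    simpa only [Finset.sum_const_zero] using tendsto_finsetSum Finset.univ fun (_ : Fin d) _ =>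
      tendsto_ofReal_div_mul_rpow_atTop C huL2.ne hgrad.ne
  simpa using le_of_tendsto_of_tendsto mass_tendsto (error_tendsto.add_const _) local_le

end Energy

/-! ### Duality between `X` and `X*` -/

section Duality

variable {d : ℕ}

lemma iUnion_shell (d : ℕ) : ⋃ j : ℤ, shell d j = {(0 : Ed d)}ᶜ := by
  ext x
  simp only [mem_iUnion, mem_compl_iff, mem_singleton_iff]
  constructor
  · rintro ⟨j, hj, -⟩
    exact norm_pos_iff.1 ((zpow_pos two_pos j).trans hj)
  · exact fun hx => exists_mem_Ioc_zpow (norm_pos_iff.2 hx) one_lt_two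

lemma setLIntegral_shell_le [NeZero d] (g : Ed d → ℝ≥0∞) (j : ℤ) :
    ∫⁻ x in shell d j, g x ≤ ENNReal.ofReal (2 ^ (j + 1)) * nX2 g := by
  have shell_subset : shell d j ⊆ closedBall 0 (2 ^ (j + 1)) := fun x hx =>
    mem_closedBall_zero_iff.2 hx.2
  have closedBall_ae_eq : closedBall (0 : Ed d) (2 ^ (j + 1)) =ᵐ[volume] ball 0 (2 ^ (j + 1)) := by
    rw [← ball_union_sphere]
    exact union_ae_eq_left_of_ae_eq_empty (ae_eq_empty.2 (Measure.addHaar_sphere volume _ _))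
  have hpos : (0 : ℝ) < 2 ^ (j + 1) := by positivity
  refine ((lintegral_mono_set shell_subset).trans_eq (setLIntegral_congr closedBall_ae_eq)).trans ?_
  rw [← ENNReal.inv_mul_le_iff (by simpa using hpos) ENNReal.ofReal_ne_top]
  exact le_iSup₂ (f := fun (R : ℝ) (_ : 0 < R) =>
    (ENNReal.ofReal R)⁻¹ * ∫⁻ x in ball (0 : Ed d) R, g x) _ hpos

lemma lintegral_mul_le_nXstar_mul_nX2 [NeZero d] {F G : Ed d → ℝ≥0∞} (hF : AEMeasurable F)
    (hG : AEMeasurable G) :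
    ∫⁻ x, F x * G x ≤ nXstar (fun x => F x ^ 2) * nX2 (fun x => G x ^ 2) ^ (1 / 2 : ℝ) := by
  calc ∫⁻ x, F x * G x
      = ∫⁻ x in ⋃ j : ℤ, shell d j, F x * G x := by rw [iUnion_shell, restrict_compl_singleton]
    _ ≤ ∑' j : ℤ, ∫⁻ x in shell d j, F x * G x := lintegral_iUnion_le _ _
    _ ≤ ∑' j : ℤ, ((∫⁻ x in shell d j, F x ^ 2) *
          (ENNReal.ofReal (2 ^ (j + 1)) * nX2 fun x => G x ^ 2)) ^ (1 / 2 : ℝ) := by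
        gcongr with j
        refine (lintegral_mul_le_rpow_mul_rpow hF.restrict hG.restrict).trans ?_
        gcongr
        exact setLIntegral_shell_le _ j
    _ = _ := by
        simp_rw [nXstar, ← ENNReal.tsum_mul_right, ← ENNReal.mul_rpow_of_nonneg _ _ one_half_pos.le]
        simp only [mul_left_comm, mul_assoc]

end Duality

/-- Radii with `a R² ≤ 1` satisfy `a R⁻¹ ≤ R⁻³`, larger ones satisfy `R⁻¹ ≤ √a`. -/
lemma ofReal_mul_nX2_le_max {d : ℕ} (a : ℝ) (g : Ed d → ℝ≥0∞) :
    ENNReal.ofReal a * nX2 g ≤ max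
      (⨆ (R : ℝ) (_ : 0 < R), (ENNReal.ofReal (R ^ 3))⁻¹ * ∫⁻ x in ball (0 : Ed d) R, g x)
      (ENNReal.ofReal √a * (ENNReal.ofReal a * ∫⁻ x, g x)) := by
  simp_rw [nX2, ENNReal.mul_iSup]
  refine iSup₂_le fun R hR => ?_
  rcases le_total (a * R ^ 2) 1 with small | large
  · refine le_max_of_le_left (le_trans ?_ (le_iSup₂ (f := fun (R : ℝ) (_ : 0 < R) =>
      (ENNReal.ofReal (R ^ 3))⁻¹ * ∫⁻ x in ball (0 : Ed d) R, g x) R hR))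
    rw [← mul_assoc]
    gcongr
    rw [← ENNReal.ofReal_inv_of_pos hR, ← ENNReal.ofReal_inv_of_pos (by positivity),
      ← ENNReal.ofReal_mul' (by positivity)]
    refine ENNReal.ofReal_le_ofReal ?_
    calc a * R⁻¹ = a * R ^ 2 * (R ^ 3)⁻¹ := by field_simp
      _ ≤ (R ^ 3)⁻¹ := mul_le_of_le_one_left (by positivity) small
  · refine le_max_of_le_right ?_
    rw [mul_left_comm]
    gcongr
    · rw [← ENNReal.ofReal_inv_of_pos hR]
      refine ENNReal.ofReal_le_ofReal (Real.le_sqrt_of_sq_le ?_)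
      rwa [inv_pow, inv_le_iff_one_le_mul₀ (by positivity)]
    · exact Measure.restrict_le_self

/-! ### Helmholtz-type equations -/

section Equation

variable {d : ℕ} {ε τ σ ρ : ℝ} {V : Ed d → ℝ} {u f : Ed d → ℂ}

lemma aemeasurable_of_helmholtz (hV : AEMeasurable V) (hu : ContDiff ℝ 2 u)
    (heq : ∀ x, -lap u x + (V x : ℂ) * u x + (σ : ℂ) * ((ε : ℂ) * Complex.I) * u x
      - (τ : ℂ) * u x = f x) : AEMeasurable f := by
  rw [← funext heq]
  have := (continuous_lap hu).measurable
  have := hu.continuous.measurable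
  fun_prop

lemma balance_of_helmholtz {x : Ed d}
    (heq : -lap u x + (V x : ℂ) * u x + (σ : ℂ) * ((ε : ℂ) * Complex.I) * u x
      - (τ : ℂ) * u x = f x) :
    σ * ε * ‖u x‖ ^ 2 =
      (starRingEnd ℂ (u x) * lap u x).im + (starRingEnd ℂ (u x) * f x).im := by
  rw [← heq, ← Complex.normSq_eq_norm_sq, Complex.normSq_apply]
  simp only [Complex.mul_im, Complex.mul_re, Complex.conj_re, Complex.conj_im, Complex.sub_im,
    Complex.sub_re, Complex.add_im, Complex.add_re, Complex.neg_im, Complex.neg_re,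
    Complex.ofReal_re, Complex.ofReal_im, Complex.I_re, Complex.I_im]
  ring

lemma le_of_mul_self_le_mul {a b : ℝ≥0∞} (ha : a ≠ ⊤) (h : a * a ≤ b * a) : a ≤ b := by
  rcases eq_or_ne a 0 with rfl | ha0
  · exact zero_le
  · exact (ENNReal.mul_le_mul_iff_left ha0 ha).1 h

theorem stmt_3_general [NeZero d] (hV : AEMeasurable V) (hσ : σ = 1 ∨ σ = -1)
    (hu : ContDiff ℝ 2 u) (huL2 : ∫⁻ x, usq u x < ⊤) (hgrad : nX2r ρ (gradSq u) < ⊤)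
    (heq : ∀ x, -lap u x + (V x : ℂ) * u x + (σ : ℂ) * ((ε : ℂ) * Complex.I) * u x
      - (τ : ℂ) * u x = f x) :
    ENNReal.ofReal |ε| * nX2 (usq u) ≤ max
      (⨆ (R : ℝ) (_ : 0 < R), (ENNReal.ofReal (R ^ 3))⁻¹ * ∫⁻ x in ball (0 : Ed d) R, usq u x)
      (nXstar (usq f) ^ 2) := by
  have energy : ENNReal.ofReal |ε| * ∫⁻ x, usq u x ≤
      nXstar (usq f) * nX2 (usq u) ^ (1 / 2 : ℝ) := by
    have enorm_eq : ‖σ * ε‖ₑ = ENNReal.ofReal |ε| := by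
      rcases hσ with rfl | rfl <;> simp [Real.enorm_eq_ofReal_abs]
    rw [← enorm_eq]
    exact (enorm_mul_lintegral_usq_le hu huL2 hgrad fun x => balance_of_helmholtz (heq x)).trans
      (lintegral_mul_le_nXstar_mul_nX2 (aemeasurable_of_helmholtz hV hu heq).enorm
        hu.continuous.enorm.aemeasurable)
  rcases le_max_iff.1 (ofReal_mul_nX2_le_max |ε| (usq u)) with small_radii | large_radii
  · exact le_max_of_le_left small_radii
  refine le_max_of_le_right (le_of_mul_self_le_mul ?_ ?_)
  · exact ne_top_of_le_ne_top (ENNReal.mul_ne_top ENNReal.ofReal_ne_top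
      (ENNReal.mul_ne_top ENNReal.ofReal_ne_top huL2.ne)) large_radii
  have sqrt_sq : ENNReal.ofReal √|ε| ^ 2 = ENNReal.ofReal |ε| := by
    rw [← ENNReal.ofReal_pow (Real.sqrt_nonneg _), Real.sq_sqrt (abs_nonneg _)]
  have rpow_half_sq : (nX2 (usq u) ^ (1 / 2 : ℝ)) ^ 2 = nX2 (usq u) := by
    rw [← ENNReal.rpow_mul_natCast]; norm_num
  calc ENNReal.ofReal |ε| * nX2 (usq u) * (ENNReal.ofReal |ε| * nX2 (usq u))
      ≤ (ENNReal.ofReal √|ε| * (nXstar (usq f) * nX2 (usq u) ^ (1 / 2 : ℝ))) ^ 2 := by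
        rw [← sq]
        exact pow_le_pow_left' (large_radii.trans (mul_le_mul_right energy _)) 2
    _ = nXstar (usq f) ^ 2 * (ENNReal.ofReal |ε| * nX2 (usq u)) := by
        rw [mul_pow, mul_pow, sqrt_sq, rpow_half_sq, mul_left_comm]

end Equation

/-- for classical solutions of `-Δu + Vu ± iεu - τu = f` with
`u, ∇u ∈ L²` and `f ∈ L²`, one has
`|ε|·‖u‖²_X ≤ ‖f‖²_{X*} + sup_{R>0} R⁻³∫_{B(0,R)}|u|² + ‖∇u‖²_X`. -/
theorem stmt_3 (d : ℕ) (hd : 3 ≤ d) (ε τ : ℝ) (hε : ε ≠ 0)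
    (V : Ed d → ℝ) (hVcont : Continuous V)
    (σ : ℝ) (hσ : σ = 1 ∨ σ = -1)
    (u f : Ed d → ℂ) (hu : ContDiff ℝ 2 u)
    (huL2 : (∫⁻ x, usq u x) < ⊤) (hgradL2 : (∫⁻ x, gradSq u x) < ⊤)
    (hfL2 : (∫⁻ x, usq f x) < ⊤)
    (heq : ∀ x, -lap u x + (V x : ℂ) * u x + (σ : ℂ) * ((ε : ℂ) * Complex.I) * u x
      - (τ : ℂ) * u x = f x) :
    ENNReal.ofReal |ε| * nX2 (usq u) ≤
      (nXstar (usq f)) ^ 2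
      + (⨆ (R : ℝ) (_ : 0 < R), (ENNReal.ofReal (R^3))⁻¹ * ∫⁻ x in ball (0 : Ed d) R, usq u x)
      + nX2 (gradSq u) := by
  have : NeZero d := ⟨by omega⟩
  exact (stmt_3_general hVcont.aemeasurable hσ hu huL2
    ((nX2r_le_lintegral le_rfl _).trans_lt hgradL2) heq).trans
    ((max_le le_add_self le_self_add).trans le_self_add)
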